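/- For all μ, ν ∈ P_2(ℝ^d), the Sliced-Wasserstein distance is dominated by the Wasserstein distance with constant c_d = 1/√d: SW_2²(μ, ν) ≤ (1/d) · W_2²(μ, ν). -/

import Mathlib

open MeasureTheory ENNReal Metric Filter
open scoped RealInnerProductSpace NNReal

noncomputable section

/-- `ℝ^d` as a Euclidean space. -/
abbrev Ed (d : ℕ) : Type := EuclideanSpace ℝ (Fin d)

/-- `π` is a coupling of `μ` and `ν`. -/
def IsCoupling {E : Type*} [MeasurableSpace E] (π : Measure (E × E)) (μ ν : Measure E) : Prop :=
  π.map Prod.fst = μ ∧ π.map Prod.snd = ν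

/-- Squared 2-Wasserstein distance. -/
def W2sq {E : Type*} [MeasurableSpace E] [NormedAddCommGroup E] (μ ν : Measure E) : ℝ≥0∞ :=
  ⨅ (π : Measure (E × E)) (_ : IsCoupling π μ ν), ∫⁻ p, (‖p.1 - p.2‖₊ : ℝ≥0∞) ^ 2 ∂π

/-- The uniform probability measure on the unit sphere `S^{d-1}`. -/
def unifSphere (d : ℕ) : Measure (sphere (0 : Ed d) 1) :=
  ((volume : Measure (Ed d)).toSphere Set.univ)⁻¹ • (volume : Measure (Ed d)).toSphere

/-- Projection `P^θ(x) = ⟨x, θ⟩`. -/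
def proj {d : ℕ} (θ : Ed d) (x : Ed d) : ℝ := ⟪x, θ⟫

/-- Squared Sliced-Wasserstein distance. -/
def SW2sq {d : ℕ} (μ ν : Measure (Ed d)) : ℝ≥0∞ :=
  ∫⁻ θ : sphere (0 : Ed d) 1,
    W2sq (μ.map (proj (θ : Ed d))) (ν.map (proj (θ : Ed d))) ∂(unifSphere d)

/-- Sliced-Wasserstein distance. -/
def SW2 {d : ℕ} (μ ν : Measure (Ed d)) : ℝ := Real.sqrt (SW2sq μ ν).toReal

/-- Finite second moment. -/
def FiniteSecondMoment {d : ℕ} (μ : Measure (Ed d)) : Prop :=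
  ∫⁻ x, (‖x‖₊ : ℝ≥0∞) ^ 2 ∂μ < ∞

/-- `μ ∈ P_2(K)`: probability measure supported in `K` with finite second moment. -/
def MemP2 {d : ℕ} (K : Set (Ed d)) (μ : Measure (Ed d)) : Prop :=
  IsProbabilityMeasure μ ∧ μ Kᶜ = 0 ∧ FiniteSecondMoment μ


lemma sphere_mp {d : ℕ} (e : Ed d ≃ₗᵢ[ℝ] Ed d)
    (g : sphere (0 : Ed d) 1 → sphere (0 : Ed d) 1) (hg : ∀ θ, (g θ : Ed d) = e θ) :
    MeasurePreserving g (volume : Measure (Ed d)).toSphere (volume : Measure (Ed d)).toSphere := by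
  have hgm : Measurable g := by
    apply Continuous.measurable
    rw [continuous_induced_rng]
    have : (Subtype.val ∘ g) = fun θ : sphere (0 : Ed d) 1 => e (θ : Ed d) := funext hg
    rw [this]
    exact e.continuous.comp continuous_subtype_val
  refine ⟨hgm, ?_⟩
  ext s hs
  rw [Measure.map_apply hgm hs, Measure.toSphere_apply' _ (hgm hs), Measure.toSphere_apply' _ hs]
  congr 1
  refine Eq.trans ?_ (MeasurePreserving.measure_preimage_equiv (f := e.toMeasurableEquiv)
    (LinearIsometryEquiv.measurePreserving e) _)
  congr 1
  ext x
  simp only [Set.mem_smul, Set.mem_image, Set.mem_preimage]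
  constructor
  · rintro ⟨r, hr, _, ⟨θ, hθ, rfl⟩, rfl⟩
    refine ⟨r, hr, _, ⟨g θ, hθ, rfl⟩, ?_⟩
    rw [hg]
    exact (e.map_smul r (θ : Ed d)).symm
  · rintro ⟨r, hr, _, ⟨θ, hθ, rfl⟩, hx⟩
    have hx : r • (θ : Ed d) = e x := hx
    have hn : e.symm θ ∈ sphere (0 : Ed d) 1 := by simp
    refine ⟨r, hr, _, ⟨⟨e.symm θ, hn⟩, ?_, rfl⟩, ?_⟩
    · have : g ⟨e.symm θ, hn⟩ = θ := Subtype.ext (by rw [hg]; simp)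
      rw [this]; exact hθ
    · apply e.injective
      rw [← hx, e.map_smul]; simp

lemma meas_inner {d : ℕ} (v : Ed d) :
    Measurable fun θ : sphere (0 : Ed d) 1 => (‖(⟪v, (θ : Ed d)⟫ : ℝ)‖₊ : ℝ≥0∞) ^ 2 := by
  fun_prop

lemma rot_inv {d : ℕ} (v w : Ed d) (h : ‖v‖ = ‖w‖) :
    ∫⁻ θ : sphere (0 : Ed d) 1, (‖(⟪v, (θ : Ed d)⟫ : ℝ)‖₊ : ℝ≥0∞) ^ 2 ∂(unifSphere d)
    = ∫⁻ θ : sphere (0 : Ed d) 1, (‖(⟪w, (θ : Ed d)⟫ : ℝ)‖₊ : ℝ≥0∞) ^ 2 ∂(unifSphere d) := by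
  obtain ⟨e, he⟩ : ∃ e : Ed d ≃ₗᵢ[ℝ] Ed d, e v = w := ⟨_, Submodule.reflection_sub h⟩
  let g : sphere (0 : Ed d) 1 → sphere (0 : Ed d) 1 := fun θ => ⟨e θ, by simp⟩
  have := sphere_mp e g (fun _ => rfl)
  unfold unifSphere
  rw [lintegral_smul_measure, lintegral_smul_measure]
  congr 1
  rw [← this.lintegral_comp (meas_inner w)]
  refine lintegral_congr fun θ => ?_
  have : (⟪w, (g θ : Ed d)⟫ : ℝ) = ⟪v, (θ : Ed d)⟫ := by
    rw [← he]; exact e.inner_map_map _ _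
  rw [this]

lemma unif_univ {d : ℕ} (hd : d ≠ 0) : unifSphere d Set.univ = 1 := by
  haveI : Nonempty (Fin d) := ⟨⟨0, Nat.pos_of_ne_zero hd⟩⟩
  haveI : Nontrivial (Ed d) := inferInstance
  unfold unifSphere
  rw [Measure.smul_apply, smul_eq_mul]
  apply ENNReal.inv_mul_cancel
  · rw [Ne, Measure.measure_univ_eq_zero]
    exact Measure.toSphere_ne_zero _
  · exact measure_ne_top _ _

lemma sum_sq {d : ℕ} (r : ℝ) (θ : Ed d) (hθ : ‖θ‖ = 1) :
    ∑ i : Fin d, (‖(⟪r • EuclideanSpace.single i (1:ℝ), θ⟫ : ℝ)‖₊ : ℝ≥0∞) ^ 2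
      = (‖r‖₊ : ℝ≥0∞) ^ 2 := by
  have h := EuclideanSpace.norm_sq_eq θ
  rw [hθ] at h
  have : ∑ i : Fin d, (‖(⟪r • EuclideanSpace.single i (1:ℝ), θ⟫ : ℝ)‖₊) ^ 2 = ‖r‖₊ ^ 2 := by
    apply NNReal.eq
    push_cast
    simp only [inner_smul_left, EuclideanSpace.inner_single_left, norm_mul, mul_pow]
    simp only [map_one, norm_one, one_pow, one_mul, ← Finset.mul_sum, ← h]
    simp
  exact_mod_cast this

lemma sphere_int {d : ℕ} (hd : d ≠ 0) (v : Ed d) :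
    ∫⁻ θ : sphere (0 : Ed d) 1, (‖(⟪v, (θ : Ed d)⟫ : ℝ)‖₊ : ℝ≥0∞) ^ 2 ∂(unifSphere d)
    = (‖v‖₊ : ℝ≥0∞) ^ 2 / d := by
  rw [ENNReal.eq_div_iff (by exact_mod_cast hd) (by simp)]
  have h1 : ∀ i : Fin d, ‖v‖ = ‖‖v‖ • (EuclideanSpace.single i (1:ℝ) : Ed d)‖ := by
    intro i; simp [norm_smul]
  calc _ = ∑ i : Fin d, ∫⁻ θ : sphere (0 : Ed d) 1,
        (‖(⟪v, (θ : Ed d)⟫ : ℝ)‖₊ : ℝ≥0∞) ^ 2 ∂(unifSphere d) := by simp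
    _ = ∑ i : Fin d, ∫⁻ θ : sphere (0 : Ed d) 1,
        (‖(⟪‖v‖ • (EuclideanSpace.single i (1:ℝ) : Ed d), (θ : Ed d)⟫ : ℝ)‖₊ : ℝ≥0∞) ^ 2
          ∂(unifSphere d) := Finset.sum_congr rfl fun i _ => rot_inv _ _ (h1 i)
    _ = ∫⁻ θ : sphere (0 : Ed d) 1, ∑ i : Fin d,
        (‖(⟪‖v‖ • (EuclideanSpace.single i (1:ℝ) : Ed d), (θ : Ed d)⟫ : ℝ)‖₊ : ℝ≥0∞) ^ 2
          ∂(unifSphere d) := (lintegral_finsetSum _ fun i _ => meas_inner _).symm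
    _ = ∫⁻ θ : sphere (0 : Ed d) 1, (‖v‖₊ : ℝ≥0∞) ^ 2 ∂(unifSphere d) := by
        refine lintegral_congr fun θ => ?_
        rw [sum_sq _ _ (by simp), nnnorm_norm]
    _ = _ := by rw [lintegral_const, unif_univ hd, mul_one]

lemma w2_proj_le {d : ℕ} (μ ν : Measure (Ed d)) (π : Measure (Ed d × Ed d))
    (hπ : IsCoupling π μ ν) (θ : Ed d) :
    W2sq (μ.map (proj θ)) (ν.map (proj θ)) ≤
      ∫⁻ p, (‖(⟪p.1 - p.2, θ⟫ : ℝ)‖₊ : ℝ≥0∞) ^ 2 ∂π := by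
  have hp : Measurable (proj θ) := by unfold proj; fun_prop
  have hm : Measurable (Prod.map (proj θ) (proj θ)) := hp.prodMap hp
  refine (iInf₂_le (π.map (Prod.map (proj θ) (proj θ))) (And.intro ?h1 ?h2)).trans ?h3
  case h1 =>
    rw [Measure.map_map measurable_fst hm, ← hπ.1, Measure.map_map hp measurable_fst]; rfl
  case h2 =>
    rw [Measure.map_map measurable_snd hm, ← hπ.2, Measure.map_map hp measurable_snd]; rfl
  case h3 =>
    rw [lintegral_map (by fun_prop) hm]
    refine le_of_eq (lintegral_congr fun p => ?_)
    simp [proj, inner_sub_left]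

/-- For all μ, ν ∈ P_2(ℝ^d), SW_2²(μ, ν) ≤ W_2²(μ, ν)/d. -/
theorem sw2sq_le_w2sq_div_dim (d : ℕ) (μ ν : Measure (Ed d))
    [IsProbabilityMeasure μ] [IsProbabilityMeasure ν]
    (hμ2 : FiniteSecondMoment μ) (hν2 : FiniteSecondMoment ν) :
    SW2sq μ ν ≤ W2sq μ ν / d := by
  rcases eq_or_ne d 0 with rfl | hd
  · haveI : IsEmpty (sphere (0 : Ed 0) 1) := by
      refine ⟨fun θ => ?_⟩
      have h : ‖(θ : Ed 0)‖ = 1 := by simp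
      rw [Subsingleton.elim (θ : Ed 0) 0] at h
      simp at h
    unfold SW2sq
    rw [lintegral_of_isEmpty]
    exact zero_le
  have hd0 : (d : ℝ≥0∞) ≠ 0 := by exact_mod_cast hd
  rw [ENNReal.le_div_iff_mul_le (Or.inl hd0) (Or.inl (by simp))]
  refine le_iInf₂ fun π hπ => ?_
  rw [← ENNReal.le_div_iff_mul_le (Or.inl hd0) (Or.inl (by simp))]
  haveI : IsFiniteMeasure π := by
    refine ⟨?_⟩
    have h := congrArg (fun m => m Set.univ) hπ.1
    simp only [Measure.map_apply measurable_fst MeasurableSet.univ, Set.preimage_univ,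
      measure_univ] at h
    rw [h]; exact ENNReal.one_lt_top
  haveI : IsFiniteMeasure (unifSphere d) := ⟨by rw [unif_univ hd]; exact ENNReal.one_lt_top⟩
  calc SW2sq μ ν ≤ ∫⁻ θ : sphere (0 : Ed d) 1,
        ∫⁻ p, (‖(⟪p.1 - p.2, (θ : Ed d)⟫ : ℝ)‖₊ : ℝ≥0∞) ^ 2 ∂π ∂(unifSphere d) :=
        lintegral_mono fun θ => w2_proj_le μ ν π hπ θ
    _ = ∫⁻ p, ∫⁻ θ : sphere (0 : Ed d) 1,
        (‖(⟪p.1 - p.2, (θ : Ed d)⟫ : ℝ)‖₊ : ℝ≥0∞) ^ 2 ∂(unifSphere d) ∂π := by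
        apply lintegral_lintegral_swap
        apply Measurable.aemeasurable
        unfold Function.uncurry
        fun_prop
    _ = ∫⁻ p, (‖p.1 - p.2‖₊ : ℝ≥0∞) ^ 2 / d ∂π := lintegral_congr fun p => sphere_int hd _
    _ = _ := by
        simp only [div_eq_mul_inv]
        rw [lintegral_mul_const _ (by fun_prop)]
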